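/- Let p be a prime, q = 1/p, and let n ≥ 1 and μ ≥ 1 be integers. Set k = ⌊n/2⌋ and s = ⌊(μ−1)/2⌋. Then P(n, p^μ) = (Π_{2k}(q) / ((1−q)·Π_k(q²))) · ((1−q^{2k+1})·T_3(k,s) − q^μ(1−q^n)·T_1(k,s)). -/

import Mathlib

/-- Number of symmetric `n × n` matrices over `ZMod m` with nonzero determinant. -/
noncomputable def Nsym (n m : ℕ) : ℕ :=
  Nat.card {A : Matrix (Fin n) (Fin n) (ZMod m) // A.IsSymm ∧ A.det ≠ 0}

/-- Proportion of symmetric `n × n` matrices over `ZMod m` with nonzero determinant. -/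
noncomputable def Psym (n m : ℕ) : ℝ :=
  (Nsym n m : ℝ) / (m : ℝ) ^ (n * (n + 1) / 2)

/-- `Π_n(t) = ∏_{j=1}^n (1 - t^j)`. -/
noncomputable def PiProd (n : ℕ) (t : ℝ) : ℝ :=
  ∏ j ∈ Finset.range n, (1 - t ^ (j + 1))

/-- `T_β(k,s)`: equal to `1` if `k = 0`, and to
`∑_{j=0}^{s} q^{βj} · Π_{k+j−1}(q²) / (Π_j(q²) · Π_{k−1}(q²))` if `k ≥ 1`. -/
noncomputable def T (q : ℝ) (β k s : ℕ) : ℝ :=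
  if k = 0 then 1
  else ∑ j ∈ Finset.range (s + 1),
    q ^ (β * j) * PiProd (k + j - 1) (q ^ 2) / (PiProd j (q ^ 2) * PiProd (k - 1) (q ^ 2))

/-!
Write a symmetric matrix as a bordered matrix with corner `a`, first row `(a, v)` and lower right
block `B`, and let `ϖ` generate the maximal ideal. If `a` is a unit, a translation of `B` turns `B`
into the Schur complement, and up to a unit the determinant is that of a uniform symmetric matrix
of size smaller by one. If `a` is not a unit but some entry of `v` is, the same works with a
`2 × 2` pivot. Otherwise `ϖ` can be pulled out of the first row; a second look at the corner either
gives a unit pivot again or lets `ϖ` be pulled out of the first column too.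

Applied to the indicator functions of the elements not annihilated by `ϖ ^ i`, this is a
recurrence in the size of the matrix and in the length of the ring. It determines the proportions,
and the generating series in the length which solves it is a combination of geometric series times
`∏_{i < k} (1 - q ^ (2 i + 3) X ^ 2)⁻¹`, whose coefficients are Gaussian binomials.
-/

open Finset Matrix
open scoped BigOperators

section Averages

variable {M : Type*} [AddCommMonoid M]

theorem expect_add_right [Module ℚ≥0 M] {G : Type*} [AddGroup G] [Fintype G] (f : G → M) (t : G) :
    𝔼 x, f (x + t) = 𝔼 x, f x :=
  Fintype.expect_equiv (Equiv.addRight t) _ _ fun _ => rfl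

theorem expect_prod [Module ℚ≥0 M] {α β : Type*} [Fintype α] [Fintype β] (f : α × β → M) :
    𝔼 x, f x = 𝔼 a, 𝔼 b, f (a, b) := by
  rw [← univ_product_univ, expect_product]

variable {G H : Type*} [AddGroup G] [Fintype G] [AddGroup H] [Fintype H]

theorem sum_comp_addMonoidHom (φ : G →+ H) {f : H → M} (hf : ∀ y ∉ φ.range, f y = 0) :
    ∑ x, f (φ x) = Nat.card φ.ker • ∑ y, f y := by
  classical
  have card_fiber {y : H} (hy : y ∈ φ.range) : #{x | φ x = y} = Nat.card φ.ker := by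
    rw [AddMonoidHom.card_fiber_eq_of_mem_range φ (y := 0) hy ⟨0, map_zero φ⟩,
      Nat.card_eq_fintype_card, Fintype.card_subtype]
    simp only [AddMonoidHom.mem_ker]
  calc ∑ x, f (φ x) = ∑ y ∈ univ.image φ, #{x | φ x = y} • f y := sum_comp f φ
    _ = ∑ y ∈ univ.image φ, Nat.card φ.ker • f y :=
      sum_congr rfl fun y hy => by rw [card_fiber (by simpa using hy)]
    _ = ∑ y, Nat.card φ.ker • f y :=
      sum_subset (subset_univ _) fun y _ hy => by rw [hf y (by simpa using hy), smul_zero]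
    _ = Nat.card φ.ker • ∑ y, f y := (smul_sum ..).symm

theorem expect_eq_of_forall_notMem_range (φ : G →+ H) {f : H → ℝ} {c : ℝ}
    (hf : ∀ y ∉ φ.range, f y = c) :
    𝔼 y, f y = (1 - (φ.range.index : ℝ)⁻¹) * c + (φ.range.index : ℝ)⁻¹ * 𝔼 x, f (φ x) := by
  have hsum := sum_comp_addMonoidHom φ (f := fun y => f y - c) fun y hy => sub_eq_zero.2 (hf y hy)
  rw [nsmul_eq_mul] at hsum
  have hG : (Nat.card φ.ker * Nat.card φ.range : ℝ) = Fintype.card G := by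
    rw [← AddSubgroup.index_ker φ, ← Nat.card_eq_fintype_card]
    exact_mod_cast φ.ker.card_mul_index
  have hH : (Nat.card φ.range * φ.range.index : ℝ) = Fintype.card H := by
    rw [← Nat.card_eq_fintype_card]
    exact_mod_cast φ.range.card_mul_index
  have hker : (Nat.card φ.ker : ℝ) ≠ 0 := by exact_mod_cast Nat.card_pos.ne'
  have hrange : (Nat.card φ.range : ℝ) ≠ 0 := by exact_mod_cast Nat.card_pos.ne'
  have hindex : (φ.range.index : ℝ) ≠ 0 := by exact_mod_cast AddSubgroup.index_ne_zero_of_finite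
  have hexpect : 𝔼 y, (f y - c) = (φ.range.index : ℝ)⁻¹ * 𝔼 x, (f (φ x) - c) := by
    rw [Fintype.expect_eq_sum_div_card, Fintype.expect_eq_sum_div_card, hsum, ← hG, ← hH]
    field_simp
  simp only [expect_sub_distrib, Fintype.expect_const] at hexpect
  linarith

end Averages

section LocalRing

variable {R : Type*} [CommRing R] [IsLocalRing R] [Fintype R] {ϖ : R} {q : ℝ}

theorem expect_eq_of_forall_isUnit (hϖ : IsLocalRing.maximalIdeal R = Ideal.span {ϖ})
    (hq : q = 1 / Nat.card (IsLocalRing.ResidueField R)) {f : R → ℝ} {c : ℝ}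
    (hf : ∀ a, IsUnit a → f a = c) :
    𝔼 a, f a = (1 - q) * c + q * 𝔼 a, f (ϖ * a) := by
  have hrange : (AddMonoidHom.mulLeft ϖ).range =
      (IsLocalRing.maximalIdeal R).toAddSubgroup := by
    ext x
    simp [hϖ, Ideal.mem_span_singleton', mul_comm ϖ]
  have hindex : q = ((AddMonoidHom.mulLeft ϖ).range.index : ℝ)⁻¹ := by
    rw [hq, hrange, one_div]
    rfl
  rw [hindex]
  exact expect_eq_of_forall_notMem_range _ fun a ha => hf a (by simpa [hrange] using ha)

theorem expect_eq_of_forall_exists_isUnit {ι : Type*} [Fintype ι] [DecidableEq ι]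
    (hϖ : IsLocalRing.maximalIdeal R = Ideal.span {ϖ})
    (hq : q = 1 / Nat.card (IsLocalRing.ResidueField R)) {f : (ι → R) → ℝ} {c : ℝ}
    (hf : ∀ v, (∃ i, IsUnit (v i)) → f v = c) :
    𝔼 v, f v = (1 - q ^ Fintype.card ι) * c + q ^ Fintype.card ι * 𝔼 v, f (ϖ • v) := by
  let φ : (ι → R) →+ (ι → R) := DistribSMul.toAddMonoidHom _ ϖ
  have hrange : φ.range =
      AddSubgroup.pi Set.univ fun _ => (IsLocalRing.maximalIdeal R).toAddSubgroup := by
    ext v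
    simp [φ, hϖ, Ideal.mem_span_singleton', mul_comm ϖ, AddSubgroup.mem_pi, funext_iff,
      Classical.skolem]
  have hindex : q ^ Fintype.card ι = (φ.range.index : ℝ)⁻¹ := by
    rw [hq, hrange, AddSubgroup.index_pi, prod_const, card_univ, one_div, inv_pow, Nat.cast_pow]
    rfl
  rw [hindex]
  exact expect_eq_of_forall_notMem_range φ fun v hv =>
    hf v (by simpa [hrange, AddSubgroup.mem_pi] using hv)

end LocalRing

section SymmetricMatrices

/-- The additive group of symmetric matrices. -/
def symmMatrices (ι R : Type*) [AddGroup R] : AddSubgroup (Matrix ι ι R) where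
  carrier := {A | A.IsSymm}
  zero_mem' := isSymm_zero
  add_mem' := IsSymm.add
  neg_mem' := IsSymm.neg

noncomputable instance (ι R : Type*) [AddGroup R] [Finite ι] [Finite R] :
    Fintype (symmMatrices ι R) := Fintype.ofFinite _

/-- A symmetric matrix is determined by its entries at unordered pairs of indices. -/
def symmMatricesEquiv (ι R : Type*) [AddGroup R] : symmMatrices ι R ≃ (Sym2 ι → R) where
  toFun A := Sym2.lift ⟨A.1, fun i j => A.2.apply j i⟩
  invFun f := ⟨of fun i j => f s(i, j), IsSymm.ext fun _ _ => congrArg f Sym2.eq_swap⟩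
  left_inv _ := rfl
  right_inv _ := funext <| Sym2.ind fun _ _ => rfl

theorem card_symmMatrices (ι R : Type*) [AddGroup R] [Fintype ι] :
    Nat.card (symmMatrices ι R) =
      Nat.card R ^ (Fintype.card ι * (Fintype.card ι + 1) / 2) := by
  classical
  rw [Nat.card_congr (symmMatricesEquiv ι R), Nat.card_fun, Nat.card_eq_fintype_card (α := Sym2 ι),
    Sym2.card, Nat.choose_two_right, Nat.add_sub_cancel, mul_comm]

/-- Simultaneous reindexing of the rows and columns of symmetric matrices. -/
def symmMatricesReindex {ι κ : Type*} (e : ι ≃ κ) (R : Type*) [AddGroup R] :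
    symmMatrices ι R ≃ symmMatrices κ R where
  toFun A := ⟨A.1.submatrix e.symm e.symm, A.2.submatrix _⟩
  invFun A := ⟨A.1.submatrix e e, A.2.submatrix _⟩
  left_inv A := by ext; simp
  right_inv A := by ext; simp

variable {R : Type*} [CommRing R] {ι κ : Type*}

/-- The matrix with blocks `a`, `vᵀ`, `r • v` and `B`; it is symmetric if `r = 1` and `B` is. The
factor `r` makes room for a scalar pulled out of the first row but not out of the first column. -/
def border (r a : R) (v : ι → R) (B : Matrix ι ι R) : Matrix (Unit ⊕ ι) (Unit ⊕ ι) R :=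
  fromBlocks (of fun _ _ => a) (replicateRow Unit v) (replicateCol Unit (r • v)) B

theorem isSymm_border_one (a : R) (v : ι → R) {B : Matrix ι ι R} (hB : B.IsSymm) :
    (border 1 a v B).IsSymm :=
  IsSymm.fromBlocks rfl (by simp) hB

/-- A symmetric matrix of positive size as a bordered smaller one. -/
def borderEquiv (ι R : Type*) [CommRing R] :
    R × (ι → R) × symmMatrices ι R ≃ symmMatrices (Unit ⊕ ι) R where
  toFun x := ⟨border 1 x.1 x.2.1 x.2.2, isSymm_border_one x.1 x.2.1 x.2.2.2⟩
  invFun A := ⟨A.1 (.inl ()) (.inl ()), fun j => A.1 (.inl ()) (.inr j),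
    ⟨A.1.toBlocks₂₂, A.2.submatrix Sum.inr⟩⟩
  left_inv _ := rfl
  right_inv A := by
    ext (i | i) (j | j)
    · rfl
    · rfl
    · simpa [border] using A.2.apply (.inr i) (.inl j)
    · rfl

theorem border_submatrix (e : κ ≃ ι) (r a : R) (v : ι → R) (B : Matrix ι ι R) :
    (border r a v B).submatrix (Equiv.sumCongr (.refl Unit) e) (Equiv.sumCongr (.refl Unit) e) =
      border r a (v ∘ e) (B.submatrix e e) := by
  ext (i | i) (j | j) <;> rfl

variable [Fintype ι] [DecidableEq ι] [Fintype κ] [DecidableEq κ]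

theorem det_border_unit (r a : R) (v : Unit → R) (B : Matrix Unit Unit R) :
    (border r a v B).det = a * B () () - v () * (r * v ()) := by
  let e : Fin 1 ⊕ Fin 1 ≃ Unit ⊕ Unit := Equiv.sumCongr (.ofUnique _ _) (.ofUnique _ _)
  rw [← det_submatrix_equiv_self (finSumFinEquiv.symm.trans e), det_fin_two]
  rfl

theorem det_border_smul (s r a : R) (v : ι → R) (B : Matrix ι ι R) :
    (border r (s * a) (s • v) B).det = s * (border (r * s) a v B).det := by
  have h : border r (s * a) (s • v) B =
      fromBlocks (of fun _ _ => s) 0 0 1 * border (r * s) a v B := by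
    rw [border, border, fromBlocks_multiply]
    congr 1 <;> ext <;> simp [Matrix.mul_apply, mul_assoc]
  rw [h, det_mul, det_fromBlocks_zero₂₁]
  simp

theorem det_border_mul (s r a : R) (v : ι → R) (B : Matrix ι ι R) :
    (border (s * r) (s * a) v B).det = s * (border r a v B).det := by
  have h : border (s * r) (s * a) v B =
      border r a v B * fromBlocks (of fun _ _ => s) 0 0 1 := by
    rw [border, border, fromBlocks_multiply]
    congr 1 <;> ext <;> simp [Matrix.mul_apply, mul_comm, mul_left_comm]
  rw [h, det_mul, det_fromBlocks_zero₂₁, mul_comm]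
  simp

variable [Finite R]

/-- The average of `g (det A)` over all symmetric matrices `A`. -/
noncomputable def symmDetAvg (ι : Type*) [Fintype ι] [DecidableEq ι] (g : R → ℝ) : ℝ :=
  𝔼 A : symmMatrices ι R, g A.1.det

/-- The average of `g` over the determinants of the matrices `border r a v B`, for `B` ranging
over all symmetric matrices. -/
noncomputable def borderDetAvg (g : R → ℝ) (r a : R) (v : ι → R) : ℝ :=
  𝔼 B : symmMatrices ι R, g (border r a v B.1).det

theorem symmDetAvg_congr (e : ι ≃ κ) (g : R → ℝ) : symmDetAvg ι g = symmDetAvg κ g :=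
  Fintype.expect_equiv (symmMatricesReindex e R) _ _ fun A => by
    rw [symmMatricesReindex, Equiv.coe_fn_mk, det_submatrix_equiv_self]

theorem borderDetAvg_comp_equiv (e : κ ≃ ι) (g : R → ℝ) (r a : R) (v : ι → R) :
    borderDetAvg g r a (v ∘ e) = borderDetAvg g r a v :=
  (Fintype.expect_equiv (symmMatricesReindex e.symm R) _ _ fun B => by
    rw [symmMatricesReindex, Equiv.coe_fn_mk, ← det_submatrix_equiv_self
      (Equiv.sumCongr (.refl Unit) e), border_submatrix]; rfl).symm

theorem borderDetAvg_mul_smul (g : R → ℝ) (s r a : R) (v : ι → R) :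
    borderDetAvg g r (s * a) (s • v) = borderDetAvg (fun x => g (s * x)) (r * s) a v :=
  expect_congr rfl fun B _ => by rw [det_border_smul]

theorem borderDetAvg_mul_mul (g : R → ℝ) (s r a : R) (v : ι → R) :
    borderDetAvg g (s * r) (s * a) v = borderDetAvg (fun x => g (s * x)) r a v :=
  expect_congr rfl fun B _ => by rw [det_border_mul]

theorem symmDetAvg_unit_sum [Fintype R] (g : R → ℝ) :
    symmDetAvg (Unit ⊕ ι) g = 𝔼 a : R, 𝔼 v : ι → R, borderDetAvg g 1 a v := by
  rw [symmDetAvg, ← Fintype.expect_equiv (borderEquiv ι R) _ _ fun _ => rfl, expect_prod]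
  exact expect_congr rfl fun a _ => expect_prod _

/-- A translation of the lower right block turns it into the Schur complement. -/
theorem expect_det_fromBlocks {g : R → ℝ} (hg : ∀ u, IsUnit u → ∀ x, g (u * x) = g x)
    {K : Matrix κ κ R} (hK : K.IsSymm) (hdet : IsUnit K.det) (X : Matrix κ ι R) (r : R) :
    𝔼 C : symmMatrices ι R, g (fromBlocks K X (r • Xᵀ) C.1).det = symmDetAvg ι g := by
  have := K.invertibleOfIsUnitDet hdet
  have hsymm : (r • Xᵀ * K⁻¹ * X).IsSymm := by
    simp [Matrix.IsSymm, transpose_mul, transpose_nonsing_inv, hK.eq, Matrix.mul_assoc]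
  rw [symmDetAvg, ← expect_add_right (fun A : symmMatrices ι R => g A.1.det) (-⟨_, hsymm⟩)]
  refine expect_congr rfl fun C _ => ?_
  rw [det_fromBlocks₁₁, hg _ hdet, invOf_eq_nonsing_inv, sub_eq_add_neg]
  rfl

theorem borderDetAvg_of_isUnit {g : R → ℝ} (hg : ∀ u, IsUnit u → ∀ x, g (u * x) = g x)
    (r : R) {a : R} (ha : IsUnit a) (v : ι → R) :
    borderDetAvg g r a v = symmDetAvg ι g :=
  expect_det_fromBlocks hg (K := of fun _ _ => a) rfl (by simpa using ha) (replicateRow Unit v) r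

theorem borderDetAvg_unit_sum_of_isUnit [IsLocalRing R] {g : R → ℝ}
    (hg : ∀ u, IsUnit u → ∀ x, g (u * x) = g x) {a : R} (ha : ¬ IsUnit a) {v : Unit ⊕ ι → R}
    (hv : IsUnit (v (.inl ()))) :
    borderDetAvg g 1 a v = symmDetAvg ι g := by
  have := Fintype.ofFinite R
  have hdet (b : R) : IsUnit (border 1 a (fun _ : Unit => v (.inl ())) (of fun _ _ => b)).det := by
    have hab : ¬ IsUnit (-(a * b)) := fun h =>
      ha (isUnit_of_mul_isUnit_left ((IsUnit.neg_iff _).1 h))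
    have hsum : IsUnit (a * b - v (.inl ()) * v (.inl ()) + -(a * b)) := by
      convert (hv.mul hv).neg using 1
      ring
    rw [det_border_unit, one_mul, of_apply]
    exact (IsLocalRing.isUnit_or_isUnit_of_isUnit_add hsum).resolve_right hab
  rw [borderDetAvg, ← Fintype.expect_equiv (borderEquiv ι R) _ _ fun _ => rfl, expect_prod]
  refine (expect_congr rfl fun b _ => ?_).trans (Fintype.expect_const _)
  rw [expect_prod]
  refine (expect_congr rfl fun w _ => ?_).trans (Fintype.expect_const _)
  rw [← expect_det_fromBlocks hg (isSymm_border_one a _ (IsSymm.ext fun _ _ => rfl)) (hdet b)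
    (of (Sum.elim (fun _ => v ∘ Sum.inr) fun _ => w)) 1]
  refine expect_congr rfl fun C _ => ?_
  rw [← det_submatrix_equiv_self (Equiv.sumAssoc Unit Unit ι)]
  congr 2
  ext ((i | i) | i) ((j | j) | j) <;> simp [border, borderEquiv]

theorem borderDetAvg_of_exists_isUnit [IsLocalRing R] {g : R → ℝ}
    (hg : ∀ u, IsUnit u → ∀ x, g (u * x) = g x) {a : R} (ha : ¬ IsUnit a) {v : ι → R}
    (hv : ∃ i, IsUnit (v i)) (hcard : Fintype.card ι = Fintype.card κ + 1) :
    borderDetAvg g 1 a v = symmDetAvg κ g := by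
  obtain ⟨j, hj⟩ := hv
  obtain ⟨e⟩ : Nonempty (Unit ⊕ κ ≃ ι) := Fintype.card_eq.1 (by simp [hcard, add_comm])
  rw [← borderDetAvg_comp_equiv ((Equiv.swap (.inl ()) (e.symm j)).trans e)]
  exact borderDetAvg_unit_sum_of_isUnit hg ha (by simpa using hj)

end SymmetricMatrices

section Recurrence

variable {R : Type*} [CommRing R] [IsLocalRing R] {ϖ : R} {q : ℝ} {g : R → ℝ}

theorem expect_borderDetAvg [Fintype R] {ι : Type*} [Fintype ι] [DecidableEq ι]
    (hϖ : IsLocalRing.maximalIdeal R = Ideal.span {ϖ})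
    (hq : q = 1 / Nat.card (IsLocalRing.ResidueField R))
    (hg : ∀ u, IsUnit u → ∀ x, g (u * x) = g x) (r : R) :
    𝔼 a, 𝔼 v : ι → R, borderDetAvg g r a v =
      (1 - q) * symmDetAvg ι g + q * 𝔼 a, 𝔼 v : ι → R, borderDetAvg g r (ϖ * a) v :=
  expect_eq_of_forall_isUnit hϖ hq fun _ ha =>
    (expect_congr rfl fun v _ => borderDetAvg_of_isUnit hg r ha v).trans (Fintype.expect_const _)

theorem expect_borderDetAvg_of_not_isUnit [Fintype R]
    (hϖ : IsLocalRing.maximalIdeal R = Ideal.span {ϖ})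
    (hq : q = 1 / Nat.card (IsLocalRing.ResidueField R))
    (hg : ∀ u, IsUnit u → ∀ x, g (u * x) = g x) (n : ℕ) {a : R} (ha : ¬ IsUnit a) :
    𝔼 v : Fin n → R, borderDetAvg g 1 a v = (1 - q ^ n) * symmDetAvg (Fin (n - 1)) g +
      q ^ n * 𝔼 v : Fin n → R, borderDetAvg g 1 a (ϖ • v) := by
  have h := expect_eq_of_forall_exists_isUnit (ι := Fin n) (f := borderDetAvg g 1 a)
    (c := symmDetAvg (Fin (n - 1)) g) hϖ hq fun v hv => by
      obtain ⟨i, -⟩ := id hv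
      exact borderDetAvg_of_exists_isUnit hg ha hv (by
        rw [Fintype.card_fin, Fintype.card_fin, Nat.sub_add_cancel i.pos])
  rwa [Fintype.card_fin] at h

theorem symmDetAvg_fin_succ [Finite R]
    (hϖ : IsLocalRing.maximalIdeal R = Ideal.span {ϖ})
    (hq : q = 1 / Nat.card (IsLocalRing.ResidueField R))
    (hg : ∀ u, IsUnit u → ∀ x, g (u * x) = g x) (n : ℕ) :
    symmDetAvg (Fin (n + 1)) g = (1 - q) * symmDetAvg (Fin n) g +
      q * (1 - q ^ n) * symmDetAvg (Fin (n - 1)) g +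
      q ^ (n + 1) * (1 - q) * symmDetAvg (Fin n) (fun x => g (ϖ * x)) +
      q ^ (n + 2) * symmDetAvg (Fin (n + 1)) (fun x => g (ϖ ^ 2 * x)) := by
  have := Fintype.ofFinite R
  have hϖg (u : R) (hu : IsUnit u) (x : R) : g (ϖ * (u * x)) = g (ϖ * x) := by
    rw [mul_left_comm, hg u hu]
  have hϖa (a : R) : ¬ IsUnit (ϖ * a) := by
    rw [← mem_nonunits_iff, ← IsLocalRing.mem_maximalIdeal, hϖ]
    exact Ideal.mul_mem_right _ _ (Ideal.mem_span_singleton_self ϖ)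
  have succ_eq (g : R → ℝ) : symmDetAvg (Fin (n + 1)) g =
      𝔼 a, 𝔼 v : Fin n → R, borderDetAvg g 1 a v := by
    rw [← symmDetAvg_unit_sum]
    exact symmDetAvg_congr (Fintype.equivOfCardEq (by simp [add_comm])) g
  have split_corner := expect_borderDetAvg (ι := Fin n) hϖ hq hg 1
  have split_vector : 𝔼 a, 𝔼 v : Fin n → R, borderDetAvg g 1 (ϖ * a) v =
      (1 - q ^ n) * symmDetAvg (Fin (n - 1)) g +
        q ^ n * 𝔼 a, 𝔼 v : Fin n → R, borderDetAvg (fun x => g (ϖ * x)) ϖ a v := by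
    simp only [expect_borderDetAvg_of_not_isUnit hϖ hq hg n (hϖa _), expect_add_distrib,
      Fintype.expect_const, ← mul_expect, borderDetAvg_mul_smul, one_mul]
  have split_corner_again := expect_borderDetAvg (ι := Fin n) (g := fun x => g (ϖ * x)) hϖ hq hϖg ϖ
  have pull_column (a : R) (v : Fin n → R) : borderDetAvg (fun x => g (ϖ * x)) ϖ (ϖ * a) v =
      borderDetAvg (fun x => g (ϖ ^ 2 * x)) 1 a v := by
    simpa [pow_two, mul_assoc] using borderDetAvg_mul_mul (fun x => g (ϖ * x)) ϖ 1 a v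
  simp only [pull_column] at split_corner_again
  rw [succ_eq g, succ_eq fun x => g (ϖ ^ 2 * x), split_corner, split_vector, split_corner_again]
  ring

end Recurrence

section GeneratingSeries

open PowerSeries

/-- The `t`-analogue of `Nat.multichoose k j`, that is the Gaussian binomial coefficient
`[k + j - 1, j]` in `t`. -/
def qMultichoose {A : Type*} [CommRing A] (t : A) : ℕ → ℕ → A
  | _, 0 => 1
  | 0, _ + 1 => 0
  | k + 1, j + 1 => t ^ k * qMultichoose t (k + 1) j + qMultichoose t k (j + 1)

/-- The power series `∏_{i < k} (1 - c t ^ i X)⁻¹`, given by its coefficients. -/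
def qMultichooseSeries {A : Type*} [CommRing A] (t c : A) (k : ℕ) : A⟦X⟧ :=
  PowerSeries.mk fun j => c ^ j * qMultichoose t k j

/-- The power series `∑_{m ≥ 1} a ^ m X ^ m`. -/
noncomputable def geomTail {A : Type*} [CommRing A] (a : A) : A⟦X⟧ :=
  PowerSeries.mk (fun m => a ^ m) - 1

/-- The product `∏_{i < k} (1 - q ^ (2 i + 1))`. -/
def oddProd {A : Type*} [CommRing A] (q : A) (k : ℕ) : A := ∏ i ∈ range k, (1 - q ^ (2 * i + 1))

/-- The power series `∏_{i < k} (1 - q ^ (2 i + 3) X ^ 2)⁻¹`. -/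
noncomputable def evenSeries {A : Type*} [CommRing A] (q : A) (k : ℕ) : A⟦X⟧ :=
  expand 2 two_ne_zero (qMultichooseSeries (q ^ 2) (q ^ 3) k)

/-- `1 - q` times the generating series in `μ` of the proportion of symmetric `n × n` matrices
with nonzero determinant over chain rings of length `μ` with residue field of size `1 / q`. -/
noncomputable def symmSeries {A : Type*} [CommRing A] (q : A) (n : ℕ) : A⟦X⟧ :=
  C (oddProd q (n / 2)) *
    ((C (1 - q ^ (2 * (n / 2) + 1)) * geomTail 1 - C (1 - q ^ n) * geomTail q) *
      evenSeries q (n / 2))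

variable {A : Type*} [CommRing A]

theorem qMultichoose_zero_right (t : A) (k : ℕ) : qMultichoose t k 0 = 1 := by
  cases k <;> simp only [qMultichoose]

theorem qMultichooseSeries_zero (t c : A) : qMultichooseSeries t c 0 = 1 := by
  ext (_ | j) <;> simp [qMultichooseSeries, qMultichoose, coeff_one]

theorem one_sub_mul_qMultichooseSeries_succ (t c : A) (k : ℕ) :
    (1 - C (c * t ^ k) * X) * qMultichooseSeries t c (k + 1) = qMultichooseSeries t c k := by
  ext (_ | j)
  · simp [qMultichooseSeries, qMultichoose_zero_right]
  · rw [sub_mul, one_mul, mul_assoc, map_sub, coeff_C_mul, coeff_succ_X_mul]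
    simp only [qMultichooseSeries, coeff_mk, qMultichoose]
    ring

theorem coeff_zero_geomTail (a : A) : coeff 0 (geomTail a) = 0 := by
  simp [geomTail]

theorem coeff_geomTail (a : A) {m : ℕ} (hm : m ≠ 0) : coeff m (geomTail a) = a ^ m := by
  simp [geomTail, coeff_one, hm]

theorem geomTail_eq (a : A) : geomTail a = C a * X + C a * X * geomTail a := by
  ext (_ | m)
  · simp [coeff_zero_geomTail]
  · rw [coeff_geomTail a m.succ_ne_zero, mul_assoc, map_add, coeff_C_mul, coeff_C_mul,
      coeff_succ_X_mul, coeff_X]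
    rcases m with _ | m
    · simp [coeff_zero_geomTail]
    · simp [coeff_geomTail, pow_succ']

theorem oddProd_succ (q : A) (k : ℕ) :
    oddProd q (k + 1) = oddProd q k * (1 - q ^ (2 * k + 1)) := prod_range_succ _ _

theorem evenSeries_zero (q : A) : evenSeries q 0 = 1 := by
  rw [evenSeries, qMultichooseSeries_zero, map_one]

theorem evenSeries_eq_mul_succ (q : A) (k : ℕ) :
    evenSeries q k = (1 - C (q ^ (2 * k + 3)) * X ^ 2) * evenSeries q (k + 1) := by
  rw [evenSeries, ← one_sub_mul_qMultichooseSeries_succ, map_mul, map_sub, map_one, map_mul,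
    expand_C, expand_X, ← pow_mul, ← pow_add, add_comm 3, evenSeries]

theorem symmSeries_two_mul (q : A) (k : ℕ) : symmSeries q (2 * k) = C (oddProd q k) *
    ((1 - C (q ^ (2 * k + 1)) * X) * (geomTail 1 - geomTail q) * evenSeries q k) := by
  rw [symmSeries, Nat.mul_div_cancel_left k two_pos]
  congr 2
  have h1 := geomTail_eq (1 : A)
  have hq := geomTail_eq q
  simp only [map_sub, map_one, map_pow] at *
  linear_combination C q ^ (2 * k) * hq - C q ^ (2 * k + 1) * h1

theorem symmSeries_two_mul_add_one (q : A) (k : ℕ) : symmSeries q (2 * k + 1) =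
    C (oddProd q (k + 1)) * ((geomTail 1 - geomTail q) * evenSeries q k) := by
  rw [symmSeries, show (2 * k + 1) / 2 = k by omega, oddProd_succ, map_mul]
  ring

theorem symmSeries_succ (q : A) (n : ℕ) :
    symmSeries q (n + 1) = C (1 - q) * symmSeries q n +
      C (q * (1 - q ^ n)) * symmSeries q (n - 1) +
      C (q ^ (n + 1) * (1 - q)) * (X * symmSeries q n) +
      C (q ^ (n + 2)) * (X ^ 2 * symmSeries q (n + 1)) := by
  rcases Nat.even_or_odd' n with ⟨k, rfl | rfl⟩
  · rw [symmSeries_two_mul_add_one, symmSeries_two_mul, oddProd_succ]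
    rcases k with _ | k
    · simp only [map_mul, map_sub, map_pow, map_one]
      ring
    · rw [show 2 * (k + 1) - 1 = 2 * k + 1 by omega, symmSeries_two_mul_add_one,
        evenSeries_eq_mul_succ q k]
      simp only [map_mul, map_sub, map_pow, map_one]
      ring
  · rw [Nat.add_sub_cancel, show 2 * k + 1 + 1 = 2 * (k + 1) by ring, symmSeries_two_mul_add_one,
      symmSeries_two_mul, symmSeries_two_mul, oddProd_succ, evenSeries_eq_mul_succ q k]
    simp only [map_mul, map_sub, map_pow, map_one]
    ring

theorem coeff_zero_symmSeries (q : A) (n : ℕ) : coeff 0 (symmSeries q n) = 0 := by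
  simp [symmSeries, geomTail]

theorem coeff_symmSeries_zero (q : A) {m : ℕ} (hm : m ≠ 0) : coeff m (symmSeries q 0) = 1 - q := by
  simp [symmSeries, oddProd, evenSeries_zero, -map_sub, coeff_C_mul, coeff_geomTail _ hm]

theorem coeff_X_pow_mul_of_coeff_zero {f : A⟦X⟧} (hf : coeff 0 f = 0) (d m : ℕ) :
    coeff m (X ^ d * f) = coeff (m - d) f := by
  rw [coeff_X_pow_mul']
  split_ifs with h
  · rfl
  · rw [Nat.sub_eq_zero_of_le (not_le.1 h).le, hf]

theorem coeff_symmSeries_succ (q : A) (n m : ℕ) :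
    coeff m (symmSeries q (n + 1)) = (1 - q) * coeff m (symmSeries q n) +
      q * (1 - q ^ n) * coeff m (symmSeries q (n - 1)) +
      q ^ (n + 1) * (1 - q) * coeff (m - 1) (symmSeries q n) +
      q ^ (n + 2) * coeff (m - 2) (symmSeries q (n + 1)) := by
  have hX := coeff_X_pow_mul_of_coeff_zero (coeff_zero_symmSeries q n) 1 m
  rw [pow_one] at hX
  conv_lhs => rw [symmSeries_succ]
  simp only [map_add, coeff_C_mul, hX, coeff_X_pow_mul_of_coeff_zero (coeff_zero_symmSeries q _)]

theorem coeff_mul_expand (d : ℕ) (hd : d ≠ 0) (f F : A⟦X⟧) (m : ℕ) :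
    coeff m (f * expand d hd F) =
      ∑ j ∈ range (m / d + 1), coeff j F * coeff (m - d * j) f := by
  rw [mul_comm, coeff_mul, Finset.Nat.sum_antidiagonal_eq_sum_range_succ_mk]
  symm
  have hd' : 0 < d := Nat.pos_of_ne_zero hd
  refine sum_of_injOn (d * ·) (mul_right_injective₀ hd).injOn ?_ ?_ ?_
  · intro j hj
    simpa [Nat.lt_succ_iff, Nat.le_div_iff_mul_le hd', mul_comm] using hj
  · intro i hi hi'
    have hdi : ¬ d ∣ i := by
      rintro ⟨j, rfl⟩
      refine hi' ⟨j, ?_, rfl⟩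
      simpa [Nat.lt_succ_iff, Nat.le_div_iff_mul_le hd', mul_comm] using hi
    rw [coeff_expand_of_not_dvd _ _ _ hdi, zero_mul]
  · intro j _
    simp only [coeff_expand_mul]

theorem coeff_mul_evenSeries {f : A⟦X⟧} (hf : coeff 0 f = 0) (q : A) (k m : ℕ) :
    coeff m (f * evenSeries q k) = ∑ j ∈ range ((m - 1) / 2 + 1),
      q ^ (3 * j) * qMultichoose (q ^ 2) k j * coeff (m - 2 * j) f := by
  rw [evenSeries, coeff_mul_expand]
  simp only [qMultichooseSeries, coeff_mk, ← pow_mul]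
  refine (sum_subset (range_subset_range.2 (by omega)) fun j _ hj => ?_).symm
  rw [show m - 2 * j = 0 by rw [mem_range] at hj; omega, hf, mul_zero]

theorem PiProd_succ (n : ℕ) (t : ℝ) : PiProd (n + 1) t = PiProd n t * (1 - t ^ (n + 1)) :=
  prod_range_succ _ _

theorem abs_pow_ne_one {t : ℝ} (ht : |t| ≠ 1) {m : ℕ} (hm : m ≠ 0) : |t ^ m| ≠ 1 := by
  rwa [abs_pow, Ne, pow_eq_one_iff_of_nonneg (abs_nonneg t) hm]

theorem PiProd_ne_zero {t : ℝ} (ht : |t| ≠ 1) (n : ℕ) : PiProd n t ≠ 0 :=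
  prod_ne_zero_iff.2 fun j _ h => abs_pow_ne_one ht j.succ_ne_zero <| by
    rw [← sub_eq_zero.1 h, abs_one]

theorem PiProd_two_mul (q : ℝ) (k : ℕ) : PiProd (2 * k) q = oddProd q k * PiProd k (q ^ 2) := by
  induction k with
  | zero => simp [PiProd, oddProd]
  | succ k ih =>
    rw [Nat.mul_succ, PiProd_succ, PiProd_succ, ih, oddProd_succ, PiProd_succ]
    ring

theorem qMultichoose_succ_mul_PiProd (t : ℝ) :
    ∀ k j, qMultichoose t (k + 1) j * (PiProd j t * PiProd k t) = PiProd (k + j) t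
  | k, 0 => by simp [qMultichoose, PiProd]
  | 0, j + 1 => by
    have ih := qMultichoose_succ_mul_PiProd t 0 j
    simp only [qMultichoose, zero_add, PiProd_succ] at *
    linear_combination (1 - t ^ (j + 1)) * ih
  | k + 1, j + 1 => by
    have ih_left := qMultichoose_succ_mul_PiProd t (k + 1) j
    have ih_right := qMultichoose_succ_mul_PiProd t k (j + 1)
    rw [show k + 1 + j = k + j + 1 by ring] at ih_left
    rw [show k + 1 + (j + 1) = k + j + 1 + 1 by ring]
    rw [← add_assoc] at ih_right
    rw [qMultichoose]
    simp only [PiProd_succ] at *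
    linear_combination t ^ (k + 1) * (1 - t ^ (j + 1)) * ih_left + (1 - t ^ (k + 1)) * ih_right

variable {q : ℝ}

theorem T_eq_sum_qMultichoose (hq : |q| ≠ 1) (β k s : ℕ) :
    T q β k s = ∑ j ∈ range (s + 1), q ^ (β * j) * qMultichoose (q ^ 2) k j := by
  have hne := PiProd_ne_zero (abs_pow_ne_one hq two_ne_zero)
  rcases k with _ | k
  · simp [T, sum_range_succ', qMultichoose]
  · rw [T, if_neg k.succ_ne_zero]
    refine sum_congr rfl fun j _ => ?_
    rw [Nat.add_sub_cancel, show k + 1 + j - 1 = k + j by omega, ← qMultichoose_succ_mul_PiProd,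
      ← mul_assoc, mul_div_cancel_right₀ _ (mul_ne_zero (hne j) (hne k))]

theorem coeff_geomTail_one_mul_evenSeries (hq : |q| ≠ 1) (k : ℕ) {m : ℕ} (hm : m ≠ 0) :
    coeff m (geomTail 1 * evenSeries q k) = T q 3 k ((m - 1) / 2) := by
  rw [coeff_mul_evenSeries (coeff_zero_geomTail _), T_eq_sum_qMultichoose hq]
  refine sum_congr rfl fun j hj => ?_
  rw [mem_range] at hj
  rw [coeff_geomTail _ (by omega), one_pow, mul_one]

theorem coeff_geomTail_mul_evenSeries (hq : |q| ≠ 1) (k : ℕ) {m : ℕ} (hm : m ≠ 0) :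
    coeff m (geomTail q * evenSeries q k) = q ^ m * T q 1 k ((m - 1) / 2) := by
  rw [coeff_mul_evenSeries (coeff_zero_geomTail _), T_eq_sum_qMultichoose hq, mul_sum]
  refine sum_congr rfl fun j hj => ?_
  rw [mem_range] at hj
  have hpow : q ^ (3 * j) * q ^ (m - 2 * j) = q ^ m * q ^ (1 * j) := by
    rw [← pow_add, ← pow_add]
    congr 1
    omega
  rw [coeff_geomTail _ (by omega)]
  linear_combination qMultichoose (q ^ 2) k j * hpow

theorem coeff_symmSeries (hq : |q| ≠ 1) (n : ℕ) {m : ℕ} (hm : m ≠ 0) :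
    coeff m (symmSeries q n) = oddProd q (n / 2) *
      ((1 - q ^ (2 * (n / 2) + 1)) * T q 3 (n / 2) ((m - 1) / 2) -
        q ^ m * (1 - q ^ n) * T q 1 (n / 2) ((m - 1) / 2)) := by
  rw [symmSeries, sub_mul, mul_assoc (C _), mul_assoc (C _), coeff_C_mul, map_sub, coeff_C_mul,
    coeff_C_mul, coeff_geomTail_one_mul_evenSeries hq _ hm, coeff_geomTail_mul_evenSeries hq _ hm]
  ring

end GeneratingSeries

section Proportion

variable {R : Type*} [CommRing R]

open scoped Classical in
/-- The indicator function of the elements that are not annihilated by `r`. -/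
noncomputable def nonannIndicator (r x : R) : ℝ := if r * x = 0 then 0 else 1

theorem nonannIndicator_isUnit_mul (r u : R) (hu : IsUnit u) (x : R) :
    nonannIndicator r (u * x) = nonannIndicator r x := by
  rw [nonannIndicator, mul_left_comm, hu.mul_right_eq_zero, nonannIndicator]

theorem nonannIndicator_mul (r s x : R) :
    nonannIndicator r (s * x) = nonannIndicator (r * s) x := by
  rw [nonannIndicator, ← mul_assoc, nonannIndicator]

theorem nonannIndicator_zero (x : R) : nonannIndicator 0 x = 0 := by
  simp [nonannIndicator]

theorem card_isSymm_det_ne_zero_div [Finite R] (n : ℕ) :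
    (Nat.card {A : Matrix (Fin n) (Fin n) R // A.IsSymm ∧ A.det ≠ 0} : ℝ) /
      (Nat.card R : ℝ) ^ (n * (n + 1) / 2) = symmDetAvg (Fin n) (nonannIndicator (1 : R)) := by
  classical
  have hcard : Nat.card {A : Matrix (Fin n) (Fin n) R // A.IsSymm ∧ A.det ≠ 0} =
      #{A : symmMatrices (Fin n) R | A.1.det ≠ 0} := by
    rw [← Fintype.card_subtype, ← Nat.card_eq_fintype_card]
    exact Nat.card_congr (Equiv.subtypeSubtypeEquivSubtypeInter _ _).symm
  have htotal := card_symmMatrices (Fin n) R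
  rw [Fintype.card_fin] at htotal
  rw [symmDetAvg, Fintype.expect_eq_sum_div_card, ← Nat.card_eq_fintype_card, htotal, hcard]
  simp [nonannIndicator, ← sum_boole]

theorem isNilpotent_of_maximalIdeal_eq_span [IsLocalRing R] [Finite R] {ϖ : R}
    (hϖ : IsLocalRing.maximalIdeal R = Ideal.span {ϖ}) : IsNilpotent ϖ :=
  Ring.KrullDimLE.isNilpotent_iff_mem_maximalIdeal.2 (hϖ ▸ Ideal.mem_span_singleton_self ϖ)

theorem one_sub_mul_symmDetAvg_nonannIndicator [IsLocalRing R] [Finite R] {ϖ : R} {q : ℝ}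
    (hϖ : IsLocalRing.maximalIdeal R = Ideal.span {ϖ})
    (hq : q = 1 / Nat.card (IsLocalRing.ResidueField R)) (n i : ℕ) :
    (1 - q) * symmDetAvg (Fin n) (nonannIndicator (ϖ ^ i)) =
      PowerSeries.coeff (nilpotencyClass ϖ - i) (symmSeries q n) := by
  rcases le_or_gt (nilpotencyClass ϖ) i with hi | hi
  · have hϖi : ϖ ^ i = 0 := 
      pow_eq_zero_of_le hi <| pow_nilpotencyClass <| isNilpotent_of_maximalIdeal_eq_span hϖ
    simp [Nat.sub_eq_zero_of_le hi, coeff_zero_symmSeries, hϖi, nonannIndicator_zero, symmDetAvg]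
  match n with
  | 0 =>
    have hϖi : ϖ ^ i ≠ 0 := Nat.notMem_of_lt_sInf hi
    simp [coeff_symmSeries_zero q (Nat.sub_ne_zero_of_lt hi), hϖi, symmDetAvg, nonannIndicator]
  | n + 1 =>
    rw [symmDetAvg_fin_succ hϖ hq (nonannIndicator_isUnit_mul _) n, coeff_symmSeries_succ]
    simp only [nonannIndicator_mul, ← pow_add, ← pow_succ, Nat.sub_sub]
    rw [← one_sub_mul_symmDetAvg_nonannIndicator hϖ hq n i,
      ← one_sub_mul_symmDetAvg_nonannIndicator hϖ hq (n - 1) i,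
      ← one_sub_mul_symmDetAvg_nonannIndicator hϖ hq n (i + 1),
      ← one_sub_mul_symmDetAvg_nonannIndicator hϖ hq (n + 1) (i + 2)]
    ring
termination_by (n, nilpotencyClass ϖ - i)

theorem Psym_explicit_general [IsLocalRing R] [Finite R] {ϖ : R}
    (hϖ : IsLocalRing.maximalIdeal R = Ideal.span {ϖ}) (q : ℝ)
    (hq : q = 1 / Nat.card (IsLocalRing.ResidueField R)) (n μ : ℕ)
    (hμ : μ = nilpotencyClass ϖ) (k s : ℕ) (hk : k = n / 2) (hs : s = (μ - 1) / 2) :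
    (Nat.card {A : Matrix (Fin n) (Fin n) R // A.IsSymm ∧ A.det ≠ 0} : ℝ) /
        (Nat.card R : ℝ) ^ (n * (n + 1) / 2) =
      (PiProd (2 * k) q / ((1 - q) * PiProd k (q ^ 2))) *
        ((1 - q ^ (2 * k + 1)) * T q 3 k s - q ^ μ * (1 - q ^ n) * T q 1 k s) := by
  have hμ0 : μ ≠ 0 :=
    hμ ▸ (pos_nilpotencyClass_iff.2 <| isNilpotent_of_maximalIdeal_eq_span hϖ).ne'
  have hq_abs : |q| ≠ 1 := by
    have := Finite.of_surjective _ (IsLocalRing.residue_surjective (R := R))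
    have hcard : 1 < (Nat.card (IsLocalRing.ResidueField R) : ℝ) := by
      exact_mod_cast Finite.one_lt_card
    rw [hq, one_div, abs_inv, Nat.abs_cast]
    exact (inv_lt_one_of_one_lt₀ hcard).ne
  have hq1 : 1 - q ≠ 0 := fun h => hq_abs <| by rw [← sub_eq_zero.1 h, abs_one]
  have hcoeff := one_sub_mul_symmDetAvg_nonannIndicator hϖ hq n 0
  rw [pow_zero, Nat.sub_zero, ← hμ, coeff_symmSeries hq_abs n hμ0, ← hk, ← hs] at hcoeff
  rw [card_isSymm_det_ne_zero_div, PiProd_two_mul,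
    mul_div_mul_right _ _ (PiProd_ne_zero (abs_pow_ne_one hq_abs two_ne_zero) k),
    div_mul_eq_mul_div, eq_div_iff hq1, mul_comm, hcoeff]

end Proportion

section PrimePower

variable {p μ : ℕ} [Fact p.Prime] [NeZero μ]

/-- Reduction modulo `p` of the residue classes modulo a positive power of `p`. -/
def zmodPrimePowReduction (p μ : ℕ) [NeZero μ] : ZMod (p ^ μ) →+* ZMod p :=
  ZMod.castHom (dvd_pow_self p (NeZero.ne μ)) (ZMod p)

instance : IsLocalHom (zmodPrimePowReduction p μ) where
  map_nonunit a ha := by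
    obtain ⟨a, rfl⟩ := ZMod.natCast_zmod_surjective a
    rw [map_natCast, ZMod.isUnit_iff_coprime] at ha
    exact (ZMod.isUnit_iff_coprime _ _).2 (ha.pow_right μ)

instance : IsLocalRing (ZMod (p ^ μ)) := (zmodPrimePowReduction p μ).domain_isLocalRing

theorem ker_zmodPrimePowReduction :
    RingHom.ker (zmodPrimePowReduction p μ) = IsLocalRing.maximalIdeal (ZMod (p ^ μ)) :=
  IsLocalRing.ker_eq_maximalIdeal _ (ZMod.ringHom_surjective _)

variable (p μ)

theorem maximalIdeal_zmod_prime_pow :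
    IsLocalRing.maximalIdeal (ZMod (p ^ μ)) = Ideal.span {(p : ZMod (p ^ μ))} := by
  rw [← ker_zmodPrimePowReduction]
  ext a
  obtain ⟨a, rfl⟩ := ZMod.natCast_zmod_surjective a
  rw [RingHom.mem_ker, map_natCast, ZMod.natCast_eq_zero_iff, Ideal.mem_span_singleton]
  refine ⟨Nat.cast_dvd_cast, fun h => ?_⟩
  simpa [ZMod.natCast_eq_zero_iff] using map_dvd (zmodPrimePowReduction p μ) h

theorem card_residueField_zmod_prime_pow :
    Nat.card (IsLocalRing.ResidueField (ZMod (p ^ μ))) = p := by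
  rw [IsLocalRing.ResidueField, ← ker_zmodPrimePowReduction,
    Nat.card_congr (RingHom.quotientKerEquivOfSurjective (ZMod.ringHom_surjective _)).toEquiv,
    Nat.card_zmod]

end PrimePower

theorem nilpotencyClass_zmod_pow {p : ℕ} (hp : 1 < p) (μ : ℕ) :
    nilpotencyClass (p : ZMod (p ^ μ)) = μ := by
  have pow_eq_zero (k : ℕ) : (p : ZMod (p ^ μ)) ^ k = 0 ↔ μ ≤ k := by
    rw [← Nat.cast_pow, ZMod.natCast_eq_zero_iff, Nat.pow_dvd_pow_iff_le_right hp]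
  simp only [nilpotencyClass, pow_eq_zero]
  exact csInf_Ici

theorem Psym_explicit (p : ℕ) (hp : p.Prime) (q : ℝ) (hq : q = 1 / p)
    (n μ : ℕ) (hn : 1 ≤ n) (hμ : 1 ≤ μ) (k s : ℕ) (hk : k = n / 2)
    (hs : s = (μ - 1) / 2) :
    Psym n (p ^ μ) =
      (PiProd (2 * k) q / ((1 - q) * PiProd k (q ^ 2))) *
        ((1 - q ^ (2 * k + 1)) * T q 3 k s - q ^ μ * (1 - q ^ n) * T q 1 k s) := by
  have := Fact.mk hp
  have : NeZero μ := ⟨Nat.one_le_iff_ne_zero.1 hμ⟩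
  have h := Psym_explicit_general (maximalIdeal_zmod_prime_pow p μ) q
    (by rw [hq, card_residueField_zmod_prime_pow]) n μ
    (nilpotencyClass_zmod_pow hp.one_lt μ).symm k s hk hs
  rwa [Nat.card_zmod] at h
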